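/- Let f be a polynomial with complex coefficients, and suppose ∫_0^1 f(x)^p dx = 0 for every positive integer p. Then f is the zero polynomial. -/

import Mathlib

/-!
For `f` of degree `d > 0` with leading coefficient `a`, let `A` be the ring generated by the
coefficients of `f`. It is a Jacobson ring, so some maximal ideal `𝔪` of `A` misses `d a`, and by
Zariski's lemma the residue field `A ⧸ 𝔪` has positive characteristic `p`. Then `p ∤ d`, so there
are arbitrarily large `n` for which `n d + 1 = p ^ e` is a power of `p`. Writing `f ^ n = ∑ cₖ Xᵏ`,
its moment is `∑ cₖ / (k + 1)`. The term `k = n d` is `aⁿ / p ^ e`, whereas `p ^ e` does not divide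
`k + 1` for any smaller `k`. Since `a` is a unit modulo `𝔪`, the pole at `p` of the top term cannot
cancel, and the moment is nonzero.
-/

open Polynomial Filter

section UnitIntegral

/-- The formal integral over `[0, 1]` of a polynomial over a `ℚ`-algebra, with `Xᵏ` integrating to
`1 / (k + 1)`. Unlike the analytic integral, it is compatible with every homomorphism of
`ℚ`-algebras. -/
noncomputable def unitIntegral {R : Type*} [CommRing R] [Algebra ℚ R] : R[X] →ₗ[R] R :=
  lsum fun k => ((k : ℚ) + 1)⁻¹ • LinearMap.id

variable {R S : Type*} [CommRing R] [Algebra ℚ R] [CommRing S] [Algebra ℚ S]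

lemma unitIntegral_monomial (k : ℕ) (c : R) :
    unitIntegral (monomial k c) = ((k : ℚ) + 1)⁻¹ • c :=
  sum_monomial_index c _ (smul_zero _)

lemma unitIntegral_C (c : R) : unitIntegral (C c) = c := by
  rw [← monomial_zero_left, unitIntegral_monomial]
  simp

lemma unitIntegral_eq_sum_range (q : R[X]) {n : ℕ} (hn : q.natDegree < n) :
    unitIntegral q = ∑ k ∈ Finset.range n, ((k : ℚ) + 1)⁻¹ • q.coeff k :=
  sum_over_range' q (fun _ => smul_zero _) n hn

lemma unitIntegral_map (φ : R →ₐ[ℚ] S) (q : R[X]) :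
    unitIntegral (q.map (φ : R →+* S)) = φ (unitIntegral q) := by
  induction q using Polynomial.induction_on' with
  | add q r hq hr => rw [Polynomial.map_add, map_add, hq, hr, map_add, map_add]
  | monomial k c =>
    rw [map_monomial, unitIntegral_monomial, unitIntegral_monomial, map_smul, RingHom.coe_coe]

lemma integral_eval_eq_unitIntegral {B : Type*} [NormedCommRing B] [NormedAlgebra ℝ B]
    [CompleteSpace B] [Algebra ℚ B] (q : B[X]) :
    ∫ x in (0 : ℝ)..1, q.eval (algebraMap ℝ B x) = unitIntegral q := by
  induction q using Polynomial.induction_on' with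
  | add q r hq hr =>
    have hint (s : B[X]) : IntervalIntegrable (fun x : ℝ => s.eval (algebraMap ℝ B x))
        MeasureTheory.volume 0 1 :=
      (s.continuous.comp (continuous_algebraMap ℝ B)).intervalIntegrable _ _
    simp_rw [eval_add]
    rw [intervalIntegral.integral_add (hint q) (hint r), hq, hr, map_add]
  | monomial k c =>
    have heval (x : ℝ) : (monomial k c).eval (algebraMap ℝ B x) = x ^ k • c := by
      rw [eval_monomial, ← map_pow, mul_comm, ← Algebra.smul_def]
    simp_rw [heval]
    rw [intervalIntegral.integral_smul_const, integral_pow, unitIntegral_monomial,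
      ← Rat.cast_smul_eq_qsmul ℝ]
    simp

lemma natCast_mul_unitIntegral_map {A : Type*} [CommRing A] (φ : A →+* R) (q : A[X]) {n L : ℕ}
    (hn : q.natDegree < n) (hL : ∀ k < n, k + 1 ∣ L) :
    (L : R) * unitIntegral (q.map φ) =
      φ (∑ k ∈ Finset.range n, ((L / (k + 1) : ℕ) : A) * q.coeff k) := by
  rw [unitIntegral_eq_sum_range _ (natDegree_map_le.trans_lt hn), Finset.mul_sum, map_sum]
  refine Finset.sum_congr rfl fun k hk => ?_
  have hcast : ((L / (k + 1) : ℕ) : ℚ) = L * ((k : ℚ) + 1)⁻¹ := by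
    rw [Nat.cast_div (hL k (Finset.mem_range.mp hk)) (by positivity), div_eq_mul_inv]
    push_cast
    rfl
  rw [map_mul, map_natCast, coeff_map, ← nsmul_eq_mul, ← nsmul_eq_mul,
    ← Nat.cast_smul_eq_nsmul ℚ, ← Nat.cast_smul_eq_nsmul ℚ, hcast, mul_smul]

end UnitIntegral

section PrimePowers

lemma frequently_exists_pow_eq_mul_add_one {p d : ℕ} (hp : 1 < p) (hd : 0 < d)
    (hpd : p.Coprime d) : ∃ᶠ n in atTop, ∃ e, p ^ e = n * d + 1 := by
  refine frequently_atTop.mpr fun N => ?_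
  set e := d.totient * (N * d + 1)
  have hmod : p ^ e ≡ 1 [MOD d] := by
    simpa only [e, pow_mul, one_pow] using (Nat.ModEq.pow_totient hpd).pow (N * d + 1)
  obtain ⟨n, hn⟩ := (Nat.modEq_iff_dvd' (Nat.one_le_pow _ _ (by lia))).mp hmod.symm
  have hlt : N * d + 1 < p ^ e :=
    (Nat.le_mul_of_pos_left _ (Nat.totient_pos.mpr hd)).trans_lt (Nat.lt_pow_self hp)
  refine ⟨n, Nat.le_of_mul_le_mul_left (?_ : d * N ≤ d * n) hd, e, ?_⟩
  all_goals lia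

lemma mul_dvd_pow_mul_ordCompl_factorial {p e k m : ℕ} (hp : p.Prime) (hk : 0 < k)
    (hke : k < p ^ e) (hkm : k ≤ m) : p * k ∣ p ^ e * ordCompl[p] m.factorial := by
  have hlt : k.factorization p < e :=
    (Nat.pow_lt_pow_iff_right hp.one_lt).mp ((Nat.ordProj_le p hk.ne').trans_lt hke)
  calc p * k = p ^ (k.factorization p + 1) * ordCompl[p] k := by
        rw [pow_succ', mul_assoc, Nat.ordProj_mul_ordCompl_eq_self]
    _ ∣ p ^ e * ordCompl[p] m.factorial :=
        mul_dvd_mul (pow_dvd_pow p hlt)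
          (Nat.ordCompl_dvd_ordCompl_of_dvd (Nat.dvd_factorial hk hkm) p)

end PrimePowers

section Pole

variable {A R : Type*} [CommRing A] [CommRing R] [Algebra ℚ R] {φ : A →+* R} {𝔭 : Ideal A}
  [𝔭.IsPrime] {p : ℕ}

lemma coeff_mem_of_unitIntegral_map_eq_zero (hφ : Function.Injective φ) (hp : p.Prime)
    (hp𝔭 : (p : A) ∈ 𝔭) {q : A[X]} {m e : ℕ} (he : p ^ e = m + 1) (hq : q.natDegree ≤ m)
    (h0 : unitIntegral (q.map φ) = 0) : q.coeff m ∈ 𝔭 := by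
  -- Multiplying by `p ^ e * u` clears denominators: the coefficients below the top become multiples
  -- of `p`, while the top one is multiplied by `u`, which is prime to `p`.
  set u := ordCompl[p] m.factorial
  have hdvd {k : ℕ} (hk : k < m) : p * (k + 1) ∣ p ^ e * u :=
    mul_dvd_pow_mul_ordCompl_factorial hp k.succ_pos (by lia) hk
  have hL : ∀ k < m + 1, k + 1 ∣ p ^ e * u := fun k hk => by
    rcases Nat.lt_succ_iff_lt_or_eq.mp hk with hk | rfl
    · exact (dvd_mul_left _ p).trans (hdvd hk)
    · exact he ▸ dvd_mul_right _ u
  have hsum : ∑ k ∈ Finset.range (m + 1), ((p ^ e * u / (k + 1) : ℕ) : A) * q.coeff k = 0 :=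
    hφ <| by
      rw [← natCast_mul_unitIntegral_map φ q (Nat.lt_succ_of_le hq) hL, h0, mul_zero, map_zero]
  rw [Finset.sum_range_succ, ← he, Nat.mul_div_cancel_left u (pow_pos hp.pos e)] at hsum
  have hlower : ∑ k ∈ Finset.range m, ((p ^ e * u / (k + 1) : ℕ) : A) * q.coeff k ∈ 𝔭 := by
    refine 𝔭.sum_mem fun k hk => 𝔭.mul_mem_right _ (𝔭.mem_of_dvd (Nat.cast_dvd_cast ?_) hp𝔭)
    exact Nat.dvd_div_of_mul_dvd (mul_comm p _ ▸ hdvd (Finset.mem_range.mp hk))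
  have htop : (u : A) * q.coeff m ∈ 𝔭 :=
    (𝔭.add_mem_iff_right hlower).mp (hsum ▸ 𝔭.zero_mem)
  exact (Ideal.IsPrime.mem_or_mem ‹_› htop).resolve_left <|
    Ideal.IsPrime.notMem_of_isCoprime_of_mem
      (Nat.coprime_ordCompl hp m.factorial_ne_zero).cast hp𝔭

lemma frequently_unitIntegral_map_pow_ne_zero (hφ : Function.Injective φ) (hp : p.Prime)
    (hp𝔭 : (p : A) ∈ 𝔭) {g : A[X]} (hd : (g.natDegree : A) ∉ 𝔭) (ha : g.leadingCoeff ∉ 𝔭) :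
    ∃ᶠ n in atTop, unitIntegral ((g ^ n).map φ) ≠ 0 := by
  have hpos : 0 < g.natDegree := Nat.pos_of_ne_zero fun h => hd (by simp [h])
  have hcop : p.Coprime g.natDegree := hp.coprime_iff_not_dvd.mpr fun h =>
    hd (𝔭.mem_of_dvd (Nat.cast_dvd_cast h) hp𝔭)
  refine (frequently_exists_pow_eq_mul_add_one hp.one_lt hpos hcop).mono ?_
  rintro n ⟨e, he⟩ h0
  have hmem := coeff_mem_of_unitIntegral_map_eq_zero hφ hp hp𝔭 he natDegree_pow_le h0
  rw [coeff_pow_mul_natDegree] at hmem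
  exact ha (Ideal.IsPrime.mem_of_pow_mem ‹_› n hmem)

end Pole

section Jacobson

variable {A : Type*} [CommRing A]

lemma isJacobsonRing_of_jacobson_bot_eq_bot [Ring.DimensionLEOne A]
    (h : (⊥ : Ideal A).jacobson = ⊥) : IsJacobsonRing A :=
  isJacobsonRing_iff_prime_eq.mpr fun P hP => by
    rcases eq_or_ne P ⊥ with rfl | hbot
    · exact h
    · exact Ideal.jacobson_eq_self_of_isMaximal (H := hP.isMaximal hbot)

instance isJacobsonRing_int : IsJacobsonRing ℤ := by
  refine isJacobsonRing_of_jacobson_bot_eq_bot (eq_bot_iff.mpr fun x hx => ?_)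
  rcases Int.isUnit_iff.mp (Ideal.mem_jacobson_bot.mp hx x) with h | h <;>
    exact Ideal.mem_bot.mpr (by nlinarith)

lemma exists_isMaximal_notMem_of_not_isNilpotent [IsJacobsonRing A] {x : A}
    (hx : ¬IsNilpotent x) : ∃ 𝔪 : Ideal A, 𝔪.IsMaximal ∧ x ∉ 𝔪 := by
  by_contra! hmem
  rw [← mem_nilradical, nilradical, Ideal.radical_eq_jacobson] at hx
  exact hx (Submodule.mem_sInf.mpr fun 𝔪 h𝔪 => hmem 𝔪 h𝔪.2)

lemma exists_prime_natCast_mem_of_isMaximal [Algebra.FiniteType ℤ A] (𝔪 : Ideal A)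
    [𝔪.IsMaximal] : ∃ p : ℕ, p.Prime ∧ (p : A) ∈ 𝔪 := by
  let := Ideal.Quotient.field 𝔪
  have : Module.Finite ℤ (A ⧸ 𝔪) := finite_of_finite_type_of_isJacobsonRing ℤ (A ⧸ 𝔪)
  obtain ⟨p, hp⟩ := CharP.exists (A ⧸ 𝔪)
  have hp0 : p ≠ 0 := by
    rintro rfl
    have := CharP.charP_to_charZero (A ⧸ 𝔪)
    exact Int.not_isField <| isField_of_isIntegral_of_isField
      (RingHom.injective_int (algebraMap ℤ (A ⧸ 𝔪))) (Field.toIsField (A ⧸ 𝔪))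
  refine ⟨p, (CharP.char_is_prime_or_zero (A ⧸ 𝔪) p).resolve_right hp0, ?_⟩
  rw [← Ideal.Quotient.eq_zero_iff_mem, map_natCast, CharP.cast_eq_zero]

end Jacobson

lemma exists_subalgebra_finiteType_map_eq (k : Type*) {B : Type*} [CommRing k] [CommRing B]
    [Algebra k B] (f : B[X]) : ∃ (A : Subalgebra k B) (g : A[X]),
      Algebra.FiniteType k A ∧ g.map (algebraMap A B) = f := by
  refine ⟨Algebra.adjoin k f.coeffs, ?_⟩
  have hlift : f ∈ lifts (algebraMap (Algebra.adjoin k (f.coeffs : Set B)) B) := by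
    refine (lifts_iff_coeff_lifts f).mpr fun i => ?_
    by_cases hi : f.coeff i = 0
    · exact ⟨0, by rw [map_zero, hi]⟩
    · exact ⟨⟨_, Algebra.subset_adjoin (coeff_mem_coeffs hi)⟩, rfl⟩
  obtain ⟨g, hg⟩ := (mem_lifts f).mp hlift
  exact ⟨g, (Subalgebra.fg_iff_finiteType _).mp ⟨f.coeffs, rfl⟩, hg⟩

section Moments

variable {R : Type*} [CommRing R] [Algebra ℚ R]

lemma frequently_unitIntegral_pow_ne_zero [IsReduced R] {f : R[X]} (hf : f ≠ 0) :
    ∃ᶠ n in atTop, unitIntegral (f ^ n) ≠ 0 := by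
  rcases Nat.eq_zero_or_pos f.natDegree with hd | hd
  · obtain ⟨c, rfl⟩ := natDegree_eq_zero.mp hd
    refine Frequently.of_forall fun n => ?_
    rw [← C_pow, unitIntegral_C]
    exact fun hc => hf (by rw [eq_zero_of_pow_eq_zero hc, C_0])
  obtain ⟨A, g, hA, rfl⟩ := exists_subalgebra_finiteType_map_eq ℤ f
  have hinj : Function.Injective (algebraMap A R) := Subtype.val_injective
  rw [natDegree_map_eq_of_injective hinj] at hd
  have hnil : ¬IsNilpotent ((g.natDegree : A) * g.leadingCoeff) := fun h => hf <| by
    have : IsReduced A := isReduced_of_injective (algebraMap A R) hinj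
    have hsmul : (g.natDegree : ℚ) • algebraMap A R g.leadingCoeff = 0 := by
      rw [Nat.cast_smul_eq_nsmul, nsmul_eq_mul, ← map_natCast (algebraMap A R), ← map_mul,
        h.eq_zero, map_zero]
    have hlead : algebraMap A R g.leadingCoeff = 0 :=
      (smul_eq_zero.mp hsmul).resolve_left (Nat.cast_ne_zero.mpr hd.ne')
    rw [leadingCoeff_eq_zero.mp ((map_eq_zero_iff _ hinj).mp hlead), Polynomial.map_zero]
  have := isJacobsonRing_of_finiteType (A := ℤ) (B := A)
  obtain ⟨𝔪, h𝔪, hmem⟩ := exists_isMaximal_notMem_of_not_isNilpotent hnil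
  obtain ⟨p, hp, hp𝔪⟩ := exists_prime_natCast_mem_of_isMaximal 𝔪
  simp_rw [← Polynomial.map_pow]
  exact frequently_unitIntegral_map_pow_ne_zero hinj hp hp𝔪
    (fun h => hmem (𝔪.mul_mem_right _ h)) (fun h => hmem (𝔪.mul_mem_left _ h))

theorem polynomial_vanishing_moments_general {f : R[X]}
    (h : ∀ᶠ n in atTop, unitIntegral (f ^ n) = 0) : IsNilpotent f := by
  have : IsReduced (R ⧸ nilradical R) :=
    (nilradical R).isRadical_iff_quotient_reduced.mp (Ideal.radical_isRadical ⊥)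
  let π := Ideal.Quotient.mkₐ ℚ (nilradical R)
  have hmap : f.map (π : R →+* R ⧸ nilradical R) = 0 := by
    by_contra hne
    refine frequently_unitIntegral_pow_ne_zero hne (h.mono fun n hn => not_not_intro ?_)
    rw [← Polynomial.map_pow, unitIntegral_map, hn, map_zero]
  refine Polynomial.isNilpotent_iff.mpr fun i => mem_nilradical.mp ?_
  have hcoeff : π (f.coeff i) = 0 := by
    simpa only [coeff_map, coeff_zero, RingHom.coe_coe] using congrArg (coeff · i) hmap
  exact Ideal.Quotient.eq_zero_iff_mem.mp hcoeff

end Moments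

theorem polynomial_vanishing_moments
    (f : Polynomial ℂ)
    (h : ∀ p : ℕ, 0 < p → ∫ x in (0:ℝ)..1, (f.eval (x : ℂ)) ^ p = 0) :
    f = 0 := by
  refine (polynomial_vanishing_moments_general (eventually_atTop.mpr ⟨1, fun p hp => ?_⟩)).eq_zero
  simpa [← integral_eval_eq_unitIntegral] using h p hp
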